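/- arXiv:2007.04031 — 2 statements merged into one kernel-verified Lean document; each statement's English description precedes it below -/
import Mathlib

section
/- An integer linear recurrence sequence (a_n)_{n≥1} is a rational multiple of a Dold sequence (i.e., there exist a nonzero rational q and an integer Dold sequence (d_n)_{n≥1} with a_n = q·d_n for all n ≥ 1) if and only if it is a trace sequence, meaning that there exist an algebraic number field K, rational numbers b_1, …, b_r, and algebraic integers θ_1, …, θ_r in K such that a_n = ∑_{i=1}^{r} b_i · Tr_{K/ℚ}(θ_i^n) for all n ≥ 1. -/
/-- A sequence `(a n)` of integers (indexed by `n ≥ 1`) is a Dold sequence if for every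
`n ≥ 1`, `n` divides `∑_{d ∣ n} μ(n/d) · a d`. -/
def DoldSeq (a : ℕ → ℤ) : Prop :=
  ∀ n : ℕ, 1 ≤ n →
    (n : ℤ) ∣ ∑ d ∈ n.divisors, ArithmeticFunction.moebius (n / d) * a d

/-- A sequence `(a n)` satisfies a linear recurrence (with rational constant coefficients,
of some order `p ≥ 1`, with lowest coefficient nonzero) for `n ≥ 1`. -/
def IsLinearRecurrenceSeq (a : ℕ → ℤ) : Prop :=
  ∃ (p : ℕ) (α : ℕ → ℚ), 1 ≤ p ∧ α 0 ≠ 0 ∧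
    ∀ n : ℕ, 1 ≤ n → (a (n + p) : ℚ) = ∑ i ∈ Finset.range p, α i * (a (n + i) : ℚ)

/-- A witness that `(a n)` is a trace sequence: a number field `K`, rationals
`b 1, …, b r` and algebraic integers `θ 1, …, θ r` of `K` with
`a n = ∑ i, b i · Tr_{K/ℚ} (θ i ^ n)` for all `n ≥ 1`. -/
structure TraceSequenceWitness (a : ℕ → ℤ) where
  K : Type
  [instField : Field K]
  [instNumberField : NumberField K]
  r : ℕ
  b : Fin r → ℚ
  θ : Fin r → NumberField.RingOfIntegers K
  htrace : ∀ n : ℕ, 1 ≤ n →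
    (a n : ℚ) = ∑ i : Fin r, b i * Algebra.trace ℚ K ((θ i : K) ^ n)

/-!
*From traces to Dold sequences.* For an algebraic integer `θ` with conjugates `x i`, the polynomial
`F = ∏ i, (1 - x i * X)` has integer coefficients and `X F' / F = -∑ n, Tr (θ ^ n) X ^ n`. Writing
`F` as an infinite product `∏ m, (1 - X ^ m) ^ e m` over the integers shows that the Möbius
transform of the traces is `n * e n`.

*From Dold sequences to traces.* If `d` is a Dold sequence, then `p ∣ d (p * m) - d m` for every
prime `p`. These congruences make the ideal of recurrences satisfied by `d` radical, so
`d n = ∑ i, c i * x i ^ n` for distinct nonzero `x i`, which are algebraic integers by Fatou's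
lemma. Modulo a prime ideal above a large `p`, Vandermonde's determinant turns the congruences into
`c i ^ p = c i`. Kronecker's theorem, proved here by counting ideals, then shows that `c i` is
rational, and taking traces of the formula for `d n` concludes.
-/

open Polynomial NumberField

/-- The Möbius transform `n ↦ ∑_{d ∣ n} μ(n/d) a d`, whose `n`-th term a Dold sequence requires to
be divisible by `n`. -/
def moebiusTransform (a : ℕ → ℤ) (n : ℕ) : ℤ :=
  ∑ d ∈ n.divisors, ArithmeticFunction.moebius (n / d) * a d

lemma sum_divisors_moebiusTransform (a : ℕ → ℤ) {n : ℕ} (hn : 0 < n) :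
    ∑ m ∈ n.divisors, moebiusTransform a m = a n := by
  refine ArithmeticFunction.sum_eq_iff_sum_mul_moebius_eq.mpr (fun m _ => ?_) n hn
  exact Nat.sum_divisorsAntidiagonal' (fun i j => (ArithmeticFunction.moebius i : ℤ) * a j)

lemma DoldSeq.sum_mul {ι : Type*} {s : Finset ι} {c : ι → ℤ} {a : ι → ℕ → ℤ}
    (h : ∀ i ∈ s, DoldSeq (a i)) : DoldSeq fun n => ∑ i ∈ s, c i * a i n := by
  intro n hn
  simp only [Finset.mul_sum]
  rw [Finset.sum_comm]
  refine Finset.dvd_sum fun i hi => ?_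
  simp only [mul_left_comm _ (c i), ← Finset.mul_sum]
  exact (h i hi n hn).mul_left _

lemma DoldSeq.dvd_sub {a : ℕ → ℤ} (ha : DoldSeq a) {p m : ℕ} (hp : p.Prime) (hm : 0 < m) :
    (p : ℤ) ∣ a (p * m) - a m := by
  have hpm : 0 < p * m := Nat.mul_pos hp.pos hm
  rw [← sum_divisors_moebiusTransform a hpm, ← sum_divisors_moebiusTransform a hm,
    ← Finset.sum_sdiff_eq_sub (Nat.divisors_subset_of_dvd hpm.ne' (dvd_mul_left m p))]
  refine Finset.dvd_sum fun d hd => ?_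
  simp only [Finset.mem_sdiff, Nat.mem_divisors, not_and_or, not_not] at hd
  obtain ⟨⟨hdpm, -⟩, hdm | rfl⟩ := hd
  · have hpd : p ∣ d := by
      by_contra hpd
      exact hdm (((Nat.Prime.coprime_iff_not_dvd hp).mpr hpd).symm.dvd_of_dvd_mul_left hdpm)
    exact (Int.natCast_dvd_natCast.mpr hpd).trans (ha d (Nat.pos_of_dvd_of_pos hdpm hpm))
  · exact absurd hm (lt_irrefl 0)

lemma coeff_X_mul_derivative {R : Type*} [CommRing R] (F : PowerSeries R) (n : ℕ) :
    PowerSeries.coeff n (PowerSeries.X * PowerSeries.derivative R F) =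
      n * PowerSeries.coeff n F := by
  cases n with
  | zero => simp
  | succ n => rw [PowerSeries.coeff_succ_X_mul, PowerSeries.coeff_derivative]; push_cast; ring

/-- `HasEulerLogDeriv F s` says that `X F' = F s`, i.e. that `s` is the logarithmic derivative of
`F` with respect to the Euler operator `X d/dX`; stated without division, so that it makes sense
over every ring. -/
def HasEulerLogDeriv {R : Type*} [CommRing R] (F s : PowerSeries R) : Prop :=
  PowerSeries.X * PowerSeries.derivative R F = F * s

namespace HasEulerLogDeriv

variable {R : Type*} [CommRing R] {F G s t : PowerSeries R}

lemma one : HasEulerLogDeriv (1 : PowerSeries R) 0 := by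
  simp [HasEulerLogDeriv]

lemma mul (hF : HasEulerLogDeriv F s) (hG : HasEulerLogDeriv G t) :
    HasEulerLogDeriv (F * G) (s + t) := by
  unfold HasEulerLogDeriv at *
  rw [Derivation.leibniz, smul_eq_mul, smul_eq_mul]
  linear_combination F * hG + G * hF

lemma prod {ι : Type*} {I : Finset ι} {F s : ι → PowerSeries R}
    (h : ∀ i ∈ I, HasEulerLogDeriv (F i) (s i)) :
    HasEulerLogDeriv (∏ i ∈ I, F i) (∑ i ∈ I, s i) := by
  classical
  induction I using Finset.induction_on with
  | empty => simpa using one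
  | insert i I hi ih =>
    rw [Finset.prod_insert hi, Finset.sum_insert hi]
    exact (h i (Finset.mem_insert_self i I)).mul (ih fun j hj => h j (Finset.mem_insert_of_mem hj))

lemma units_inv {u : (PowerSeries R)ˣ} (h : HasEulerLogDeriv (u : PowerSeries R) s) :
    HasEulerLogDeriv (↑u⁻¹ : PowerSeries R) (-s) := by
  unfold HasEulerLogDeriv at *
  rw [Derivation.leibniz_of_mul_eq_one _ u.inv_mul, smul_eq_mul]
  linear_combination (-(↑u⁻¹ : PowerSeries R) ^ 2) * h -
    ((↑u⁻¹ : PowerSeries R) * s) * u.inv_mul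

lemma units_zpow {u : (PowerSeries R)ˣ} (h : HasEulerLogDeriv (u : PowerSeries R) s) (c : ℤ) :
    HasEulerLogDeriv (↑(u ^ c) : PowerSeries R) (c • s) := by
  induction c with
  | zero => simpa using one
  | succ n ih => simpa [zpow_add_one, add_smul] using ih.mul h
  | pred n ih =>
    rw [zpow_sub_one, sub_smul, one_smul, sub_eq_add_neg]
    exact ih.mul h.units_inv

lemma of_map {S : Type*} [CommRing S] {f : R →+* S} (hf : Function.Injective f)
    (h : HasEulerLogDeriv (PowerSeries.map f F) (PowerSeries.map f s)) : HasEulerLogDeriv F s := by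
  apply PowerSeries.map_injective f hf
  rw [map_mul (PowerSeries.map f) F, ← h]
  ext n
  rw [coeff_X_mul_derivative, PowerSeries.coeff_map, PowerSeries.coeff_map, coeff_X_mul_derivative]
  simp

lemma dvd_coeff (h : HasEulerLogDeriv F s) (hF : IsUnit F) {n : ℕ}
    (hs : ∀ j < n, PowerSeries.coeff j s = 0) : (n : R) ∣ PowerSeries.coeff n s := by
  have hcoeff :
      n * PowerSeries.coeff n F = PowerSeries.constantCoeff F * PowerSeries.coeff n s := by
    rw [← coeff_X_mul_derivative, h, PowerSeries.coeff_mul, Finset.sum_eq_single (0, n)]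
    · simp
    · rintro ⟨i, j⟩ hij hne
      have hsum : i + j = n := by simpa using hij
      rw [hs j (by grind), mul_zero]
    · simp
  exact (PowerSeries.isUnit_iff_constantCoeff.mp hF).dvd_mul_left.mp ⟨_, hcoeff.symm⟩

lemma one_sub_C_mul_X_pow (c : R) {n : ℕ} (hn : 0 < n) :
    HasEulerLogDeriv (1 - PowerSeries.C c * PowerSeries.X ^ n)
      (-PowerSeries.mk fun k => if n ∈ k.divisors then n * c ^ (k / n) else 0) := by
  unfold HasEulerLogDeriv
  ext k
  rw [coeff_X_mul_derivative]
  simp only [sub_mul, mul_neg, mul_assoc, map_sub, map_neg, one_mul, PowerSeries.coeff_mk,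
    PowerSeries.coeff_C_mul, PowerSeries.coeff_X_pow_mul', PowerSeries.coeff_X_pow,
    PowerSeries.coeff_one, Nat.mem_divisors]
  rcases lt_trichotomy k n with hk | rfl | hk
  · have hdvd : ¬ (n ∣ k ∧ k ≠ 0) := fun h => hk.not_ge (Nat.le_of_dvd (by omega) h.1)
    rw [if_neg hdvd, if_neg hk.ne, if_neg hk.not_ge]
    rcases eq_or_ne k 0 with rfl | hk0 <;> simp [*]
  · simp [hn.ne', Nat.div_self hn, mul_comm]
  · obtain ⟨i, rfl⟩ := Nat.exists_eq_add_of_le' hk.le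
    have hi : i ≠ 0 := by omega
    simp only [Nat.add_sub_cancel, Nat.dvd_add_self_right, Nat.add_div_right i hn, pow_succ,
      Nat.le_add_left, if_true, hi, hn.ne', Nat.add_eq_zero_iff, false_and, if_false,
      Nat.add_eq_right, not_false_eq_true, and_true, ne_eq]
    split_ifs <;> ring

lemma exists_isUnit_divisors {n : ℕ} (hn : 0 < n) (c : ℤ) : ∃ F : PowerSeries R, IsUnit F ∧
    HasEulerLogDeriv F (PowerSeries.mk fun k => if n ∈ k.divisors then (n * c : R) else 0) := by
  have hunit : IsUnit (1 - PowerSeries.C 1 * PowerSeries.X ^ n : PowerSeries R) :=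
    PowerSeries.isUnit_iff_constantCoeff.mpr (by simp [hn.ne'])
  obtain ⟨u, hu⟩ := hunit
  have hlog := one_sub_C_mul_X_pow (1 : R) hn
  rw [← hu] at hlog
  refine ⟨↑(u ^ (-c)), Units.isUnit _, ?_⟩
  convert hlog.units_zpow (-c) using 1
  ext k
  rw [map_zsmul, map_neg, PowerSeries.coeff_mk, PowerSeries.coeff_mk]
  split_ifs <;> simp [mul_comm]

end HasEulerLogDeriv

/-- Dividing `F` by `∏ m < n, (1 - X ^ m) ^ (b m / m)`, whose exponents are integers by induction,
leaves a series whose logarithmic derivative starts with `-b n X ^ n`. -/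
theorem dvd_of_hasEulerLogDeriv {F : PowerSeries ℤ} (hF : IsUnit F) {b : ℕ → ℤ}
    (h : HasEulerLogDeriv F (-PowerSeries.mk fun k => ∑ m ∈ k.divisors, b m)) {n : ℕ}
    (hn : 0 < n) : (n : ℤ) ∣ b n := by
  induction n using Nat.strong_induction_on with
  | _ n ih =>
  have hfactor : ∀ m ∈ Finset.Ico 1 n, ∃ G : PowerSeries ℤ, IsUnit G ∧
      HasEulerLogDeriv G (PowerSeries.mk fun k => if m ∈ k.divisors then b m else 0) := by
    intro m hm
    obtain ⟨hm0, hmn⟩ := Finset.mem_Ico.mp hm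
    obtain ⟨c, hc⟩ := ih m hmn hm0
    simpa [hc] using HasEulerLogDeriv.exists_isUnit_divisors (R := ℤ) hm0 c
  choose! G hG hGlog using hfactor
  have hlog := h.mul (HasEulerLogDeriv.prod hGlog)
  have hsmall : ∀ k < n, k.divisors ⊆ Finset.Ico 1 n := fun k hk m hm =>
    Finset.mem_Ico.mpr ⟨Nat.pos_of_mem_divisors hm, (Nat.divisor_le hm).trans_lt hk⟩
  have hdvd := hlog.dvd_coeff (hF.mul (IsUnit.prod_iff.mpr hG)) (n := n) fun k hk => by
    simp [Finset.sum_ite_mem, Finset.inter_eq_right.mpr (hsmall k hk), -Nat.mem_divisors]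
  have hproper : Finset.Ico 1 n ∩ n.divisors = n.properDivisors := by
    ext m
    grind [Nat.mem_properDivisors, Nat.pos_of_dvd_of_pos]
  rw [map_add, map_neg, map_sum] at hdvd
  simp only [PowerSeries.coeff_mk, Finset.sum_ite_mem, hproper] at hdvd
  rw [← Nat.cons_self_properDivisors hn.ne', Finset.sum_cons] at hdvd
  simpa [neg_add] using hdvd

theorem DoldSeq.of_hasEulerLogDeriv {F : PowerSeries ℤ} (hF : IsUnit F) {a : ℕ → ℤ}
    (h : HasEulerLogDeriv F (-PowerSeries.mk fun n => if n = 0 then 0 else a n)) : DoldSeq a := by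
  refine fun n hn => dvd_of_hasEulerLogDeriv hF (b := moebiusTransform a) ?_ hn
  convert h using 4 with k
  split_ifs with hk
  · simp [hk]
  · exact sum_divisors_moebiusTransform a (Nat.pos_of_ne_zero hk)

theorem DoldSeq.of_cast_eq_sum_pow {R ι : Type*} [CommRing R] [CharZero R] [Fintype ι] {c : ι → R}
    {P : ℤ[X]} (hP : P.map (Int.castRingHom R) = ∏ i, (1 - C (c i) * X)) {a : ℕ → ℤ}
    (ha : ∀ n, 0 < n → (a n : R) = ∑ i, c i ^ n) : DoldSeq a := by
  have hPS : PowerSeries.map (Int.castRingHom R) P =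
      ∏ i, (1 - PowerSeries.C (c i) * PowerSeries.X ^ 1) := by
    simpa using congrArg (coeToPowerSeries.ringHom (R := R)) hP
  have hunit : IsUnit (P : PowerSeries ℤ) := by
    have heval : ((P.eval 0 : ℤ) : R) = 1 := by
      simpa [eval_prod, eval_zero_map] using congrArg (eval 0) hP
    rw [PowerSeries.isUnit_iff_constantCoeff, constantCoeff_coe, coeff_zero_eq_eval_zero]
    exact (Int.cast_eq_one.mp heval).symm ▸ isUnit_one
  refine .of_hasEulerLogDeriv hunit
    (.of_map (f := Int.castRingHom R) (RingHom.injective_int _) ?_)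
  rw [hPS]
  convert HasEulerLogDeriv.prod fun i _ =>
    HasEulerLogDeriv.one_sub_C_mul_X_pow (c i) one_pos using 1
  ext n
  rw [PowerSeries.coeff_map, map_neg, PowerSeries.coeff_mk, map_sum]
  rcases Nat.eq_zero_or_pos n with rfl | hn
  · simp
  · simp [hn.ne', ha n hn]

lemma eval_charpolyRev_eq_det {R n : Type*} [CommRing R] [Fintype n] [DecidableEq n]
    (M : Matrix n n R) (t : R) : M.charpolyRev.eval t = (1 - t • M).det := by
  rw [Matrix.charpolyRev, ← coe_evalRingHom, RingHom.map_det]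
  congr 1
  ext i j
  simp [Matrix.one_apply, apply_ite, mul_comm (M i j)]

section NumberField

variable {K : Type*} [Field K] [NumberField K]

lemma cast_norm_eq_prod_embeddings (x : 𝓞 K) :
    ((Algebra.norm ℤ x : ℤ) : ℂ) = ∏ φ : K →ₐ[ℚ] ℂ, φ x := by
  rw [← Algebra.norm_eq_prod_embeddings ℚ ℂ (x : K), ← Algebra.coe_norm_int]
  simp

lemma cast_trace_eq_sum_embeddings (x : 𝓞 K) :
    ((Algebra.trace ℤ (𝓞 K) x : ℤ) : ℂ) = ∑ φ : K →ₐ[ℚ] ℂ, φ x := by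
  rw [← trace_eq_sum_embeddings ℂ (x := (x : K)), ← Algebra.coe_trace_int]
  simp

/-- The two polynomials agree at every integer `t`, where they are the norm of `1 - t θ`. -/
lemma map_charpolyRev_leftMulMatrix_basis (θ : 𝓞 K) :
    (Algebra.leftMulMatrix (RingOfIntegers.basis K) θ).charpolyRev.map (Int.castRingHom ℂ) =
      ∏ φ : K →ₐ[ℚ] ℂ, (1 - C (φ θ) * X) := by
  refine eq_of_infinite_eval_eq _ _ ((Set.infinite_range_of_injective Int.cast_injective).mono ?_)
  rintro _ ⟨t, rfl⟩
  have hdet : (Algebra.leftMulMatrix (RingOfIntegers.basis K) θ).charpolyRev.eval t =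
      Algebra.norm ℤ (1 - t • θ) := by
    rw [eval_charpolyRev_eq_det, Algebra.norm_eq_matrix_det (RingOfIntegers.basis K), map_sub,
      map_one, map_smul]
  rw [Set.mem_ofPred_eq, eval_intCast_map, Int.cast_id, hdet, eq_intCast,
    cast_norm_eq_prod_embeddings, eval_prod]
  simp [zsmul_eq_mul, mul_comm (t : ℂ)]

theorem DoldSeq.trace_pow (θ : 𝓞 K) : DoldSeq fun n => Algebra.trace ℤ (𝓞 K) (θ ^ n) :=
  .of_cast_eq_sum_pow (map_charpolyRev_leftMulMatrix_basis θ) fun n _ => by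
    rw [cast_trace_eq_sum_embeddings]
    simp

theorem exists_rat_mul_dold_eq_sum_trace {ι : Type*} [Fintype ι] (b : ι → ℚ) (θ : ι → 𝓞 K) :
    ∃ (q : ℚ) (d : ℕ → ℤ), q ≠ 0 ∧ DoldSeq d ∧
      ∀ n, ∑ i, b i * Algebra.trace ℚ K ((θ i : K) ^ n) = q * d n := by
  obtain ⟨⟨N, hN⟩, hNb⟩ := IsLocalization.exist_integer_multiples_of_finite (nonZeroDivisors ℤ) b
  choose c hc using hNb
  have hN0 : (N : ℚ) ≠ 0 := Int.cast_ne_zero.mpr (nonZeroDivisors.ne_zero hN)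
  refine ⟨(N : ℚ)⁻¹, fun n => ∑ i, c i * Algebra.trace ℤ (𝓞 K) (θ i ^ n), inv_ne_zero hN0,
    .sum_mul fun i _ => .trace_pow (θ i), fun n => ?_⟩
  have hc' : ∀ i, (c i : ℚ) = N * b i := fun i => by simpa using hc i
  rw [eq_inv_mul_iff_mul_eq₀ hN0]
  push_cast [hc', Finset.mul_sum, Algebra.coe_trace_int, map_pow]
  simp only [mul_assoc]

end NumberField

section IdealCounting

variable (K : Type*) [Field K] [NumberField K]

lemma exists_ncard_absNorm_le_le : ∃ C : ℝ, ∀ᶠ n : ℕ in Filter.atTop,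
    ({I : Ideal (𝓞 K) | I.absNorm ≤ n}.ncard : ℝ) ≤ C * n := by
  have hlim := (NumberField.Ideal.tendsto_norm_le_div_atTop K).comp tendsto_natCast_atTop_atTop
  obtain ⟨C, hC⟩ := hlim.isBoundedUnder_le
  refine ⟨C, ?_⟩
  filter_upwards [Filter.eventually_map.mp hC, Filter.eventually_gt_atTop 0] with n hn hn0
  rw [← div_le_iff₀ (Nat.cast_pos.mpr hn0), ← Nat.card_coe_set_eq]
  simp only [Function.comp_apply, Nat.cast_le] at hn
  exact hn

lemma mul_harmonic_sub_one_le_card (n : ℕ) : (n : ℚ) * (harmonic n - 1) ≤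
    ((Finset.Icc 1 n).sigma fun i => Finset.Icc 1 (n / i)).card := by
  rw [Finset.card_sigma, harmonic_eq_sum_Icc, mul_sub, Finset.mul_sum, sub_le_iff_le_add]
  have hterm : ∀ i ∈ Finset.Icc 1 n, (n : ℚ) * (i : ℚ)⁻¹ ≤ (Finset.Icc 1 (n / i)).card + 1 := by
    intro i _
    rw [← div_eq_mul_inv, Nat.card_Icc, Nat.add_sub_cancel, ← Nat.floor_div_eq_div (K := ℚ)]
    exact (Nat.lt_floor_add_one _).le
  refine (Finset.sum_le_sum hterm).trans_eq ?_
  simp [Finset.sum_add_distrib]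

lemma tendsto_harmonic_atTop : Filter.Tendsto (fun n => (harmonic n : ℝ)) .atTop .atTop :=
  Filter.tendsto_atTop_mono log_add_one_le_harmonic <| Real.tendsto_log_atTop.comp <|
    tendsto_natCast_atTop_atTop.comp <| Filter.tendsto_add_atTop_nat 1

/-- There are about `n log n` pairs with `i * j ≤ n`, but only `O(n)` ideals of norm at most `n`. -/
theorem not_injective_of_absNorm_le_mul {c : ℕ} (hc : 0 < c) {f : ℕ → ℕ → Ideal (𝓞 K)}
    (hf : ∀ i j, 0 < i → 0 < j → (f i j).absNorm ≤ c * (i * j)) :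
    ¬ Function.Injective2 f := by
  intro hinj
  obtain ⟨C, hC⟩ := exists_ncard_absNorm_le_le K
  have hcount : ∀ n, ((Finset.Icc 1 n).sigma fun i => Finset.Icc 1 (n / i)).card ≤
      {I : Ideal (𝓞 K) | I.absNorm ≤ c * n}.ncard := by
    intro n
    rw [← Set.ncard_coe_finset]
    refine Set.ncard_le_ncard_of_injOn (fun x => f x.1 x.2) ?_ ?_
      (Ideal.finite_setOfPred_absNorm_le _)
    · rintro ⟨i, j⟩ hij
      simp only [Finset.mem_coe, Finset.mem_sigma, Finset.mem_Icc] at hij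
      refine (hf i j (by omega) (by omega)).trans (Nat.mul_le_mul_left c ?_)
      rw [mul_comm]
      exact (Nat.le_div_iff_mul_le (by omega)).mp hij.2.2
    · rintro ⟨i, j⟩ - ⟨i', j'⟩ - h
      obtain ⟨rfl, rfl⟩ := hinj h
      rfl
  obtain ⟨n, hn, hharm, hn0⟩ := (((Filter.tendsto_id.const_mul_atTop' hc).eventually hC).and
    ((tendsto_harmonic_atTop.eventually_gt_atTop (C * c + 1)).and
      (Filter.eventually_gt_atTop 0))).exists
  have hle : (n : ℝ) * (harmonic n - 1) ≤ n * (C * c) := calc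
    (n : ℝ) * (harmonic n - 1)
      ≤ ((Finset.Icc 1 n).sigma fun i => Finset.Icc 1 (n / i)).card := by
        exact_mod_cast mul_harmonic_sub_one_le_card n
    _ ≤ {I : Ideal (𝓞 K) | I.absNorm ≤ c * n}.ncard := mod_cast hcount n
    _ ≤ C * (c * n : ℕ) := hn
    _ = n * (C * c) := by push_cast; ring
  have := le_of_mul_le_mul_left hle (Nat.cast_pos.mpr hn0)
  linarith

end IdealCounting

/-- The completely multiplicative extension to `ℕ` of a family indexed by the primes. -/
noncomputable def mulExtension {M : Type*} [CommMonoid M] (P : ℕ → M) (n : ℕ) : M :=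
  n.factorization.prod fun p k => P p ^ k

lemma isCoprime_mulExtension {R : Type*} [CommSemiring R] {P Q : ℕ → R} {m n : ℕ}
    (h : ∀ p ∈ m.primeFactors, ∀ q ∈ n.primeFactors, IsCoprime (P p) (Q q)) :
    IsCoprime (mulExtension P m) (mulExtension Q n) :=
  .prod_left fun p hp => .prod_right fun q hq => (h p hp q hq).pow

lemma injective2_mul_of_isCoprime {R ι κ : Type*} [CommRing R] [IsDedekindDomain R]
    {A : ι → Ideal R} {B : κ → Ideal R} (hA : A.Injective) (hB : B.Injective)
    (hAB : ∀ i j, IsCoprime (A i) (B j)) : Function.Injective2 fun i j => A i * B j := by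
  intro i i' j j' (h : A i * B j = A i' * B j')
  refine ⟨hA (dvd_antisymm ?_ ?_), hB (dvd_antisymm ?_ ?_)⟩
  · exact (hAB i j').dvd_of_dvd_mul_right (h ▸ dvd_mul_right ..)
  · exact (hAB i' j).dvd_of_dvd_mul_right (h.symm ▸ dvd_mul_right ..)
  · exact (hAB i' j).symm.dvd_of_dvd_mul_left (h ▸ dvd_mul_left ..)
  · exact (hAB i j').symm.dvd_of_dvd_mul_left (h.symm ▸ dvd_mul_left ..)

section PrimePairs

variable {K : Type*} [Field K] [NumberField K]

lemma absNorm_mulExtension {P : ℕ → Ideal (𝓞 K)} {n : ℕ} (hn : n ≠ 0)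
    (hP : ∀ p ∈ n.primeFactors, (P p).absNorm = p) : (mulExtension P n).absNorm = n := by
  rw [mulExtension, map_finsuppProd]
  conv_rhs => rw [← Nat.prod_factorization_pow_eq_self hn]
  exact Finset.prod_congr rfl fun p hp => by simp only [map_pow, hP p hp]

lemma isCoprime_of_absNorm_prime {I J : Ideal (𝓞 K)} (hI : I.absNorm.Prime)
    (hJ : J.absNorm.Prime) (hIJ : I ≠ J) : IsCoprime I J := by
  have isMaximal : ∀ {I : Ideal (𝓞 K)}, I.absNorm.Prime → I.IsMaximal := fun {I} hI =>
    (Ideal.isPrime_of_irreducible_absNorm hI).isMaximal fun h =>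
      hI.ne_zero (Ideal.absNorm_eq_zero_iff.mpr h)
  have := isMaximal hI
  have := isMaximal hJ
  exact Ideal.isCoprime_of_isMaximal hIJ

lemma lt_of_mem_primeFactors_factorial_mul_add_one {N i p : ℕ}
    (hp : p ∈ (N.factorial * i + 1).primeFactors) : N < p := by
  by_contra! hpN
  have hdvd := ((Nat.prime_of_mem_primeFactors hp).dvd_factorial.mpr hpN).mul_right i
  exact (Nat.prime_of_mem_primeFactors hp).not_dvd_one
    ((Nat.dvd_add_right hdvd).mp (Nat.dvd_of_mem_primeFactors hp))

theorem exists_prime_not_exists_ne_absNorm_eq (K : Type*) [Field K] [NumberField K] (N : ℕ) :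
    ∃ p, p.Prime ∧ N < p ∧
      ¬ ∃ P Q : Ideal (𝓞 K), P ≠ Q ∧ P.absNorm = p ∧ Q.absNorm = p := by
  by_contra! h
  choose! P Q hPQ hP hQ using h
  -- The prime factors of `u i` exceed `N`, so they are norms of the given ideals.
  let u : ℕ → ℕ := fun i => N.factorial * i + 1
  have hu : u.Injective := fun i j h => by simpa [u, N.factorial_ne_zero] using h
  have hprime : ∀ {i p}, p ∈ (u i).primeFactors → p.Prime ∧ N < p := fun hp =>
    ⟨Nat.prime_of_mem_primeFactors hp, lt_of_mem_primeFactors_factorial_mul_add_one hp⟩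
  have absNorm_left : ∀ i, (mulExtension P (u i)).absNorm = u i := fun i =>
    absNorm_mulExtension (Nat.succ_ne_zero _) fun p hp => hP p (hprime hp).1 (hprime hp).2
  have absNorm_right : ∀ i, (mulExtension Q (u i)).absNorm = u i := fun i =>
    absNorm_mulExtension (Nat.succ_ne_zero _) fun p hp => hQ p (hprime hp).1 (hprime hp).2
  have hcop : ∀ i j, IsCoprime (mulExtension P (u i)) (mulExtension Q (u j)) := by
    refine fun i j => isCoprime_mulExtension fun p hp q hq => ?_
    have hPp := hP p (hprime hp).1 (hprime hp).2
    have hQq := hQ q (hprime hq).1 (hprime hq).2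
    refine isCoprime_of_absNorm_prime (hPp.symm ▸ (hprime hp).1) (hQq.symm ▸ (hprime hq).1) ?_
    intro hIJ
    obtain rfl : p = q := by rw [← hPp, ← hQq, hIJ]
    exact hPQ p (hprime hp).1 (hprime hp).2 hIJ
  refine not_injective_of_absNorm_le_mul K (c := (N.factorial + 1) ^ 2) (by positivity)
    (fun i j hi hj => ?_) (injective2_mul_of_isCoprime
      (fun i j h => hu (by rw [← absNorm_left, h, absNorm_left]))
      (fun i j h => hu (by rw [← absNorm_right, h, absNorm_right])) hcop)
  have hle : ∀ {i}, 0 < i → u i ≤ (N.factorial + 1) * i := fun hi => by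
    rw [add_mul, one_mul]; exact Nat.add_le_add_left hi _
  rw [map_mul, absNorm_left, absNorm_right, sq, mul_mul_mul_comm]
  exact Nat.mul_le_mul (hle hi) (hle hj)

end PrimePairs

/-- The subring of the elements whose residue modulo `q` is fixed by the Frobenius map, for an
ideal `q` containing the prime number `p`. -/
def frobeniusFixedSubring {R : Type*} [CommRing R] {p : ℕ} (hp : p.Prime) {q : Ideal R}
    (hpq : (p : R) ∈ q) : Subring R :=
  have add_mem {x y : R} (hx : x ^ p - x ∈ q) (hy : y ^ p - y ∈ q) :
      (x + y) ^ p - (x + y) ∈ q := by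
    obtain ⟨r, hr⟩ := exists_add_pow_prime_eq hp x y
    convert q.add_mem (q.add_mem hx hy) (q.mul_mem_right (x * y * r) hpq) using 1
    rw [hr]
    ring
  have mul_mem {x y : R} (hx : x ^ p - x ∈ q) (hy : y ^ p - y ∈ q) :
      (x * y) ^ p - x * y ∈ q := by
    convert q.add_mem (q.mul_mem_left (x ^ p) hy) (q.mul_mem_right y hx) using 1
    ring
  have neg_mem {x : R} (hx : x ^ p - x ∈ q) : (-x) ^ p - -x ∈ q := by
    obtain ⟨r, hr⟩ := exists_add_pow_prime_eq hp x (-x)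
    rw [add_neg_cancel, zero_pow hp.ne_zero] at hr
    convert q.neg_mem (q.add_mem hx (q.mul_mem_right (x * -x * r) hpq)) using 1
    linear_combination -hr
  { carrier := {x | x ^ p - x ∈ q}
    zero_mem' := by simp [hp.ne_zero]
    one_mem' := by simp
    add_mem' := add_mem
    mul_mem' := mul_mem
    neg_mem' := neg_mem }

section Frobenius

variable {R : Type*} [CommRing R] {p : ℕ} {q : Ideal R}

lemma mem_frobeniusFixedSubring {hp : p.Prime} {hpq : (p : R) ∈ q} {x : R} :
    x ∈ frobeniusFixedSubring hp hpq ↔ x ^ p - x ∈ q :=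
  Iff.rfl

lemma charP_quotient_of_prime_mem (hp : p.Prime) (hpq : (p : R) ∈ q) (hq : q ≠ ⊤) :
    CharP (R ⧸ q) p := by
  have := Ideal.Quotient.nontrivial_iff.mpr hq
  rwa [CharP.charP_iff_prime_eq_zero hp, ← map_natCast (Ideal.Quotient.mk q),
    Ideal.Quotient.eq_zero_iff_mem]

lemma intCast_mem_iff_dvd (hp : p.Prime) (hpq : (p : R) ∈ q) (hq : q ≠ ⊤) {D : ℤ} :
    (D : R) ∈ q ↔ (p : ℤ) ∣ D := by
  have := charP_quotient_of_prime_mem hp hpq hq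
  rw [← CharP.intCast_eq_zero_iff (R ⧸ q), ← map_intCast (Ideal.Quotient.mk q),
    Ideal.Quotient.eq_zero_iff_mem]

lemma mem_frobeniusFixedSubring_of_mul_mem [hq : q.IsPrime] {hp : p.Prime} {hpq : (p : R) ∈ q}
    {D : ℤ} (hD : ¬ (p : ℤ) ∣ D) {x : R} (h : D * x ∈ frobeniusFixedSubring hp hpq) :
    x ∈ frobeniusFixedSubring hp hpq := by
  have hDfix : (D : R) ^ p - D ∈ q :=
    mem_frobeniusFixedSubring.mp (intCast_mem (frobeniusFixedSubring hp hpq) D)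
  have hDx : (D : R) * (x ^ p - x) ∈ q := by
    convert q.sub_mem (mem_frobeniusFixedSubring.mp h) (q.mul_mem_right (x ^ p) hDfix) using 1
    ring
  exact (hq.mem_or_mem hDx).resolve_left ((intCast_mem_iff_dvd hp hpq hq.ne_top).not.mpr hD)

lemma card_quotient_eq_of_frobeniusFixedSubring_eq_top [hq : q.IsMaximal] {hp : p.Prime}
    {hpq : (p : R) ∈ q} (h : frobeniusFixedSubring hp hpq = ⊤) : Nat.card (R ⧸ q) = p := by
  let := Ideal.Quotient.field q
  have := Fact.mk hp
  have := charP_quotient_of_prime_mem hp hpq hq.ne_top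
  have hbot : (⊥ : Subfield (R ⧸ q)) = ⊤ := by
    refine eq_top_iff.mpr fun y _ => ?_
    obtain ⟨x, rfl⟩ := Ideal.Quotient.mk_surjective y
    rw [Subfield.mem_bot_iff_pow_eq_self (R ⧸ q) p, ← map_pow, Ideal.Quotient.eq]
    exact mem_frobeniusFixedSubring.mp (h ▸ Subring.mem_top x)
  rw [← Subfield.card_bot (R ⧸ q) p, hbot]
  exact (Nat.card_congr Subfield.topEquiv.toEquiv).symm

end Frobenius

section Kronecker

variable {K : Type*} [Field K] [NumberField K]

lemma not_sq_dvd_span_natCast_of_not_dvd_discr {p : ℕ} {P : Ideal (𝓞 K)}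
    (hp : p.Prime) (hP : P.absNorm = p) (hdisc : ¬ (p : ℤ) ∣ discr K) :
    ¬ P ^ 2 ∣ Ideal.span {(p : 𝓞 K)} := by
  intro h
  have := PrincipalIdealRing.isMaximal_of_irreducible (Nat.prime_iff_prime_int.mp hp).irreducible
  have hdiff := pow_sub_one_dvd_differentIdeal (A := ℤ) P 2 (p := .span {(p : ℤ)})
    (by simpa using hp.ne_zero) (by simpa [Ideal.map_span] using h)
  rw [Nat.add_one_sub_one, pow_one] at hdiff
  have hnorm := map_dvd Ideal.absNorm hdiff
  rw [absNorm_differentIdeal K, hP] at hnorm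
  exact hdisc (Int.natCast_dvd.mpr hnorm)

/-- An ideal factor `P` of `p` cannot exhaust `p`, whose norm is `p ^ [K : ℚ]`. -/
theorem exists_ne_absNorm_eq {p : ℕ} (hp : p.Prime) (hdisc : ¬ (p : ℤ) ∣ discr K)
    (hK : 1 < Module.finrank ℚ K)
    (h : ∀ q : Ideal (𝓞 K), q.IsMaximal → (p : 𝓞 K) ∈ q → q.absNorm = p) :
    ∃ P Q : Ideal (𝓞 K), P ≠ Q ∧ P.absNorm = p ∧ Q.absNorm = p := by
  have hnorm : (Ideal.span {(p : 𝓞 K)}).absNorm = p ^ Module.finrank ℚ K := by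
    rw [Ideal.absNorm_span_natCast, RingOfIntegers.rank]
  have hne : Ideal.span {(p : 𝓞 K)} ≠ ⊤ := fun htop => by
    rw [htop, Ideal.absNorm_top] at hnorm
    exact (Nat.one_lt_pow (by omega) hp.one_lt).ne hnorm
  obtain ⟨P, hPmax, hP⟩ := Ideal.exists_le_maximal _ hne
  have hPp := h P hPmax ((Ideal.span_singleton_le_iff_mem _).mp hP)
  obtain ⟨J, hJ⟩ := Ideal.dvd_iff_le.mpr hP
  have hJne : J ≠ ⊤ := by
    rintro rfl
    rw [Ideal.mul_top] at hJ
    rw [hJ, hPp] at hnorm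
    exact (lt_self_pow₀ hp.one_lt hK).ne hnorm
  obtain ⟨Q, hQmax, hQ⟩ := Ideal.exists_le_maximal _ hJne
  have hpJ : Ideal.span {(p : 𝓞 K)} ≤ J := hJ.trans_le Ideal.mul_le_right
  have hQp := h Q hQmax (hQ (hpJ (Ideal.mem_span_singleton_self _)))
  refine ⟨P, Q, ?_, hPp, hQp⟩
  rintro rfl
  refine not_sq_dvd_span_natCast_of_not_dvd_discr hp hPp hdisc ?_
  rw [hJ, sq]
  exact mul_dvd_mul_left P (Ideal.dvd_iff_le.mpr hQ)

lemma exists_intCast_mul_mem_adjoin (B : PowerBasis ℚ K) {γ : 𝓞 K} (hγ : B.gen = γ) :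
    ∃ D : ℤ, D ≠ 0 ∧ ∀ x : 𝓞 K, D * x ∈ Algebra.adjoin ℤ {γ} := by
  have hint : IsIntegral ℤ B.gen := hγ ▸ γ.isIntegral_coe
  obtain ⟨D, hD⟩ := IsIntegrallyClosed.isIntegral_iff.mp
    (Algebra.discr_isIntegral ℚ fun i => B.basis_eq_pow i ▸ hint.pow i)
  refine ⟨D, ?_, fun x => ?_⟩
  · rintro rfl
    exact Algebra.discr_not_zero_of_basis ℚ B.basis (by rw [← hD, map_zero])
  · have hmem := Algebra.discr_mul_isIntegral_mem_adjoin ℚ hint x.isIntegral_coe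
    rw [← hD, eq_intCast, Int.cast_smul_eq_zsmul, zsmul_eq_mul,
      show ({B.gen} : Set K) = IsScalarTower.toAlgHom ℤ (𝓞 K) K '' {γ} by simp [hγ],
      ← AlgHom.map_adjoin] at hmem
    obtain ⟨y, hy, hyx⟩ := hmem
    obtain rfl : D * x = y := RingOfIntegers.ext (by simpa using hyx.symm)
    exact hy

/-- Kronecker: otherwise almost all primes would split completely in `K`. -/
theorem finrank_le_one_of_pow_sub_mem (B : PowerBasis ℚ K) {γ : 𝓞 K} (hγ : B.gen = γ) {N : ℕ}
    (h : ∀ p : ℕ, p.Prime → N < p → ∀ q : Ideal (𝓞 K), q.IsPrime → (p : 𝓞 K) ∈ q →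
      γ ^ p - γ ∈ q) : Module.finrank ℚ K ≤ 1 := by
  by_contra! hK
  obtain ⟨D, hD0, hD⟩ := exists_intCast_mul_mem_adjoin B hγ
  obtain ⟨p, hp, hNp, hcontra⟩ :=
    exists_prime_not_exists_ne_absNorm_eq K (N + D.natAbs + (discr K).natAbs)
  have not_dvd : ∀ {m : ℤ}, m ≠ 0 → m.natAbs < p → ¬ (p : ℤ) ∣ m := fun hm hmp hdvd =>
    Nat.not_dvd_of_pos_of_lt (Int.natAbs_pos.mpr hm) hmp (Int.natCast_dvd.mp hdvd)
  refine hcontra (exists_ne_absNorm_eq hp (not_dvd (discr_ne_zero K) (by omega)) hK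
    fun q hq hpq => card_quotient_eq_of_frobeniusFixedSubring_eq_top (hp := hp) (hpq := hpq) ?_)
  have hadjoin : Algebra.adjoin ℤ {γ} ≤ subalgebraOfSubring (frobeniusFixedSubring hp hpq) :=
    Algebra.adjoin_le (Set.singleton_subset_iff.mpr (h p hp (by omega) q hq.isPrime hpq))
  exact eq_top_iff.mpr fun x _ => mem_frobeniusFixedSubring_of_mul_mem
    (not_dvd hD0 (by omega)) (hadjoin (hD x))

/-- Every prime of `ℚ(γ)` lies under a prime of `K`, so the hypothesis descends to `ℚ(γ)`. -/
theorem exists_rat_eq_of_pow_sub_mem {γ : 𝓞 K} {N : ℕ}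
    (h : ∀ p : ℕ, p.Prime → N < p → ∀ q : Ideal (𝓞 K), q.IsPrime → (p : 𝓞 K) ∈ q →
      γ ^ p - γ ∈ q) : ∃ r : ℚ, (r : K) = γ := by
  let E := IntermediateField.adjoin ℚ {(γ : K)}
  let B : PowerBasis ℚ E := IntermediateField.adjoin.powerBasis (Algebra.IsIntegral.isIntegral _)
  have hgen : algebraMap E K B.gen = γ := by simp [B]
  have hint : IsIntegral ℤ B.gen := by
    rw [← isIntegral_algebraMap_iff (algebraMap E K).injective, hgen]
    exact γ.isIntegral_coe
  let γ' : 𝓞 E := ⟨B.gen, hint⟩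
  have hγ' : algebraMap (𝓞 E) (𝓞 K) γ' = γ := RingOfIntegers.ext hgen
  have hfinrank : Module.finrank ℚ E ≤ 1 := by
    refine finrank_le_one_of_pow_sub_mem B (γ := γ') rfl (N := N) fun p hp hNp q hq hpq => ?_
    obtain ⟨⟨Q, hQ, hQq⟩⟩ := q.nonempty_primesOver (S := 𝓞 K)
    rw [Ideal.mem_of_liesOver Q q] at hpq ⊢
    rw [map_sub, map_pow, hγ']
    exact h p hp hNp Q hQ (by simpa using hpq)
  have hbot : E = ⊥ := IntermediateField.finrank_eq_one_iff.mp
    (hfinrank.antisymm Module.finrank_pos)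
  have hγE : (γ : K) ∈ E := IntermediateField.mem_adjoin_simple_self ℚ _
  rwa [hbot, IntermediateField.mem_bot] at hγE

end Kronecker

section Shift

/-- The shift operator `(u n)_n ↦ (u (n + 1))_n` on sequences. Applying a polynomial `g` to it turns
`u` into the sequence `n ↦ ∑ j, g.coeff j * u (n + j)`. -/
def shift (R : Type*) [CommRing R] : Module.End R (ℕ → R) :=
  LinearMap.funLeft R R Nat.succ

/-- The ideal of characteristic polynomials of the linear recurrences, with coefficients in `R`,
that the sequence `u` satisfies from its zeroth term on. -/
noncomputable def recurrenceIdeal {R : Type*} [CommRing R] (u : ℕ → R) : Ideal R[X] :=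
  Ideal.torsionOf R[X] _ (Module.AEval.of R (ℕ → R) (shift R) u)

variable {R S : Type*} [CommRing R] [CommRing S]

lemma mem_recurrenceIdeal {u : ℕ → R} {h : R[X]} :
    h ∈ recurrenceIdeal u ↔ aeval (shift R) h u = 0 := by
  rw [recurrenceIdeal, Ideal.mem_torsionOf_iff, ← Module.AEval.of_aeval_smul,
    LinearEquiv.map_eq_zero_iff, Module.End.smul_def]

lemma shift_pow_apply (u : ℕ → R) (j n : ℕ) : (shift R ^ j) u n = u (n + j) := by
  induction j generalizing n with
  | zero => rfl
  | succ j ih =>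
    rw [pow_succ', Module.End.mul_apply, ← Nat.succ_add_eq_add_succ]
    exact ih _

lemma aeval_shift_monomial_apply (u : ℕ → R) (j : ℕ) (c : R) (n : ℕ) :
    aeval (shift R) (monomial j c) u n = c * u (n + j) := by
  rw [aeval_monomial, Module.End.mul_apply, Module.algebraMap_end_apply, Pi.smul_apply,
    shift_pow_apply, smul_eq_mul]

lemma aeval_shift_X_pow_apply (u : ℕ → R) (j n : ℕ) :
    aeval (shift R) (X ^ j : R[X]) u n = u (n + j) := by
  rw [map_pow, aeval_X, shift_pow_apply]

lemma aeval_shift_map_apply (φ : R →+* S) (u : ℕ → R) (g : R[X]) (n : ℕ) :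
    aeval (shift S) (g.map φ) (fun k => φ (u k)) n = φ (aeval (shift R) g u n) := by
  induction g using Polynomial.induction_on' with
  | add f g hf hg =>
    simp only [Polynomial.map_add, map_add, LinearMap.add_apply, Pi.add_apply, hf, hg]
  | monomial j c => simp only [map_monomial, aeval_shift_monomial_apply, map_mul]

lemma map_mem_recurrenceIdeal {φ : R →+* S} {u : ℕ → R} {h : R[X]} (hh : h ∈ recurrenceIdeal u) :
    h.map φ ∈ recurrenceIdeal fun n => φ (u n) := by
  rw [mem_recurrenceIdeal] at hh ⊢
  ext n
  rw [aeval_shift_map_apply, hh, Pi.zero_apply, map_zero, Pi.zero_apply]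

lemma map_mem_recurrenceIdeal_iff {φ : R →+* S} (hφ : Function.Injective φ) {u : ℕ → R} {h : R[X]} :
    h.map φ ∈ recurrenceIdeal (fun n => φ (u n)) ↔ h ∈ recurrenceIdeal u := by
  refine ⟨fun hh => ?_, map_mem_recurrenceIdeal⟩
  rw [mem_recurrenceIdeal] at hh ⊢
  ext n
  rw [Pi.zero_apply, ← map_eq_zero_iff φ hφ, ← aeval_shift_map_apply, hh, Pi.zero_apply]

lemma charPoly_mem_recurrenceIdeal {E : LinearRecurrence R} {u : ℕ → R} (hu : E.IsSolution u) :
    E.charPoly ∈ recurrenceIdeal u := by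
  rw [mem_recurrenceIdeal]
  ext n
  simp [LinearRecurrence.charPoly, shift_pow_apply, hu n]

lemma isRadical_recurrenceIdeal_algebraMap {K : Type*} [IsDomain R] [Field K] [Algebra R K]
    [IsFractionRing R K] {u : ℕ → R} (hu : (recurrenceIdeal u).IsRadical) :
    (recurrenceIdeal fun n => algebraMap R K (u n)).IsRadical := by
  rintro h ⟨e, he⟩
  obtain ⟨b, hb, hbh⟩ := IsLocalization.integerNormalization_spec (nonZeroDivisors R) h
  set g := IsLocalization.integerNormalization (nonZeroDivisors R) h
  have hg : g.map (algebraMap R K) = C (algebraMap R K b) * h := by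
    rw [hbh, ← algebraMap_smul K b h, smul_eq_C_mul]
  have hb0 : IsUnit (C (algebraMap R K b)) :=
    isUnit_C.mpr (IsLocalization.map_units K (⟨b, hb⟩ : nonZeroDivisors R))
  have hinj := IsFractionRing.injective R K
  rw [← Ideal.unit_mul_mem_iff_mem _ hb0, ← hg]
  refine map_mem_recurrenceIdeal (hu ⟨e, ?_⟩)
  rw [← map_mem_recurrenceIdeal_iff hinj, Polynomial.map_pow, hg, mul_pow]
  exact Ideal.mul_mem_left _ _ he

end Shift

section Dold

variable {d : ℕ → ℤ}

lemma C_natCast_dvd_pow_sub_expand {p : ℕ} (hp : p.Prime) (v : ℤ[X]) :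
    C (p : ℤ) ∣ v ^ p - expand ℤ p v := by
  have := Fact.mk hp
  have hmod : (v ^ p - expand ℤ p v).map (Int.castRingHom (ZMod p)) = 0 := by
    rw [Polynomial.map_sub, Polynomial.map_pow, map_expand, ZMod.expand_card, sub_self]
  refine C_dvd_iff_dvd_coeff _ _ |>.mpr fun i => ?_
  rw [← ZMod.intCast_zmod_eq_zero_iff_dvd, ← eq_intCast (Int.castRingHom (ZMod p)), ← coeff_map,
    hmod, coeff_zero]

lemma DoldSeq.dvd_aeval_shift_expand_sub (hd : DoldSeq d) {p : ℕ} (hp : p.Prime) (v : ℤ[X]) :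
    (p : ℤ) ∣ aeval (shift ℤ) (expand ℤ p (X * v)) d 0 - aeval (shift ℤ) (X * v) d 0 := by
  induction v using Polynomial.induction_on' with
  | add f g hf hg =>
    simp only [mul_add, map_add, LinearMap.add_apply, Pi.add_apply, add_sub_add_comm]
    exact dvd_add hf hg
  | monomial n c =>
    rw [X_mul_monomial, expand_monomial, aeval_shift_monomial_apply, aeval_shift_monomial_apply,
      ← mul_sub, zero_add, zero_add, mul_comm _ p]
    exact (hd.dvd_sub hp n.succ_pos).mul_left c

lemma DoldSeq.dvd_aeval_shift_pow_sub (hd : DoldSeq d) {p : ℕ} (hp : p.Prime) (v : ℤ[X]) :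
    (p : ℤ) ∣ aeval (shift ℤ) ((X * v) ^ p) d 0 - aeval (shift ℤ) (X * v) d 0 := by
  obtain ⟨w, hw⟩ := C_natCast_dvd_pow_sub_expand hp (X * v)
  rw [sub_eq_iff_eq_add.mp hw]
  simp only [map_add, LinearMap.add_apply, Pi.add_apply, add_sub_assoc]
  refine dvd_add ?_ (hd.dvd_aeval_shift_expand_sub hp v)
  simp

lemma aeval_shift_X_mul_apply_zero {R : Type*} [CommRing R] (u : ℕ → R) (g : R[X]) :
    aeval (shift R) (X * g) u 0 = aeval (shift R) g (fun n => u (n + 1)) 0 := by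
  rw [mul_comm, map_mul, aeval_X]
  rfl

/-- If `h ^ e` annihilates the sequence, then for every prime `p ≥ e` so does `h ^ p`, hence the
values of `h` on the sequence are divisible by `p`. -/
theorem DoldSeq.isRadical_recurrenceIdeal (hd : DoldSeq d) :
    (recurrenceIdeal fun n => d (n + 1)).IsRadical := by
  rintro h ⟨e, he⟩
  rw [mem_recurrenceIdeal]
  ext i
  set v : ℤ[X] := X ^ i * h
  have hv : aeval (shift ℤ) h (fun n => d (n + 1)) i = aeval (shift ℤ) (X * v) d 0 := by
    rw [aeval_shift_X_mul_apply_zero, map_mul, Module.End.mul_apply, aeval_shift_X_pow_apply,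
      zero_add]
  obtain ⟨p, hpe, hp⟩ := Nat.exists_infinite_primes (e + (aeval (shift ℤ) (X * v) d 0).natAbs + 1)
  have hvp : aeval (shift ℤ) ((X * v) ^ p) d 0 = 0 := by
    obtain ⟨k, hk⟩ := Nat.exists_eq_succ_of_ne_zero hp.ne_zero
    have hmem : X ^ k * v ^ p ∈ recurrenceIdeal fun n => d (n + 1) := by
      rw [mul_pow (X ^ i)]
      exact Ideal.mul_mem_left _ _ <| Ideal.mul_mem_left _ _ <|
        Ideal.pow_mem_of_pow_mem _ he (by omega)
    rw [mul_pow, hk, pow_succ', mul_assoc, ← hk, aeval_shift_X_mul_apply_zero,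
      mem_recurrenceIdeal.mp hmem, Pi.zero_apply]
  have hdvd := hd.dvd_aeval_shift_pow_sub hp v
  rw [hvp, zero_sub, dvd_neg] at hdvd
  rw [hv, Pi.zero_apply]
  exact Int.eq_zero_of_dvd_of_natAbs_lt_natAbs hdvd (by omega)

end Dold

section Fatou

lemma coe_aeval_restrict_apply {R M : Type*} [CommRing R] [AddCommGroup M] [Module R M]
    {f : Module.End R M} {W : Submodule R M} (hf : ∀ x ∈ W, f x ∈ W) (g : R[X]) (x : W) :
    (aeval (f.restrict hf : Module.End R W) g x : M) = aeval f g x := by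
  induction g using Polynomial.induction_on' with
  | add g h hg hh => simp only [map_add, LinearMap.add_apply, Submodule.coe_add, hg, hh]
  | monomial n c =>
    simp only [aeval_monomial, Module.End.mul_apply, Module.algebraMap_end_apply,
      Submodule.coe_smul, Module.End.pow_restrict n, LinearMap.restrict_apply]

variable {A B : Type*} [CommRing A] [CommRing B] [Algebra A B] (E : LinearRecurrence B)

/-- The `A`-module of sequences in `A` whose image in `B` satisfies the linear recurrence `E`. -/
def baseSolSpace (A : Type*) [CommRing A] [Algebra A B] : Submodule A (ℕ → A) :=
  (E.solSpace.restrictScalars A).comap ((Algebra.linearMap A B).compLeft ℕ)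

lemma shift_mem_baseSolSpace : ∀ f ∈ baseSolSpace E A, shift A f ∈ baseSolSpace E A :=
  fun f hf n => by simpa [shift, Nat.succ_add] using hf (n + 1)

variable [IsNoetherianRing A] [FaithfulSMul A B]

lemma finite_baseSolSpace : Module.Finite A (baseSolSpace E A) := by
  refine .of_injective ((LinearMap.funLeft A A ((↑) : Fin E.order → ℕ)).comp
    (baseSolSpace E A).subtype) fun f g hfg => ?_
  have hfg' := (E.eq_iff_eqOn_range_order _ _ f.2 g.2).mpr fun n hn =>
    congrArg (algebraMap A B) (congrFun hfg ⟨n, Finset.mem_range.mp hn⟩)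
  exact Subtype.ext (funext fun n => FaithfulSMul.algebraMap_injective A B (congrFun hfg' n))

/-- Fatou's lemma, by Cayley–Hamilton for the shift on the finite module `baseSolSpace E A`. -/
theorem exists_monic_mem_recurrenceIdeal {u : ℕ → A}
    (hu : E.IsSolution fun n => algebraMap A B (u n)) : ∃ Q ∈ recurrenceIdeal u, Q.Monic := by
  have := finite_baseSolSpace E (A := A)
  obtain ⟨Q, hQ, hQ0⟩ := LinearMap.exists_monic_and_aeval_eq_zero A
    ((shift A).restrict (shift_mem_baseSolSpace E))
  refine ⟨Q, mem_recurrenceIdeal.mpr ?_, hQ⟩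
  rw [← coe_aeval_restrict_apply (shift_mem_baseSolSpace E) Q ⟨u, hu⟩, hQ0]
  rfl

end Fatou

section PowerSum

/-- Modulo the characteristic polynomial `H`, the monomial `X ^ n` is the Lagrange interpolant of
`x ↦ x ^ n` at the roots of `H`. -/
theorem exists_eq_sum_roots_mul_pow {K : Type*} [Field K] [DecidableEq K] {u : ℕ → K} {H : K[X]}
    (hH : H.Separable) (hsplits : H.Splits) (hu : H ∈ recurrenceIdeal u) :
    ∃ c : K → K, ∀ n, u n = ∑ x ∈ H.roots.toFinset, c x * x ^ n := by
  set s := H.roots.toFinset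
  refine ⟨fun x => aeval (shift K) (Lagrange.basis s id x) u 0, fun n => ?_⟩
  set P : K[X] := Lagrange.interpolate s id (fun x => x ^ n)
  have hdvd : H ∣ X ^ n - P := by
    rcases eq_or_ne (X ^ n - P) 0 with hP | hP
    · exact hP ▸ dvd_zero H
    rw [hsplits.dvd_iff_roots_le_roots hH.ne_zero hP, Multiset.le_iff_subset (nodup_roots hH)]
    intro x hx
    have hPx : P.eval x = x ^ n := Lagrange.eval_interpolate_at_node (v := id) _
      Function.injective_id.injOn (Multiset.mem_toFinset.mpr hx)
    rw [mem_roots hP, IsRoot.def, eval_sub, eval_pow, eval_X, hPx, sub_self]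
  have hmem := mem_recurrenceIdeal.mp (Ideal.mem_of_dvd _ hdvd hu)
  rw [map_sub, LinearMap.sub_apply, sub_eq_zero] at hmem
  calc u n = aeval (shift K) (X ^ n : K[X]) u 0 := by rw [aeval_shift_X_pow_apply, zero_add]
    _ = aeval (shift K) P u 0 := by rw [hmem]
    _ = ∑ x ∈ s, aeval (shift K) (Lagrange.basis s id x) u 0 * x ^ n := by
      simp only [P, Lagrange.interpolate_apply, C_mul', map_sum, map_smul, LinearMap.sum_apply,
        Finset.sum_apply, LinearMap.smul_apply, Pi.smul_apply, smul_eq_mul, mul_comm (_ ^ n)]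

lemma exists_separable_span_eq_of_isRadical {k : Type*} [Field k] [PerfectField k]
    {I : Ideal k[X]} (hI : I.IsRadical) (hI0 : I ≠ ⊥) :
    ∃ G : k[X], G.Separable ∧ I = Ideal.span {G} := by
  obtain ⟨G, rfl⟩ := (IsPrincipalIdealRing.principal I).principal
  refine ⟨G, PerfectField.separable_iff_squarefree.mpr (IsRadical.squarefree ?_ ?_), rfl⟩
  · rintro rfl
    simp at hI0
  · exact fun n h hdvd =>
      Ideal.mem_span_singleton.mp (hI ⟨n, Ideal.mem_span_singleton.mpr hdvd⟩)

theorem exists_eq_sum_mul_pow_of_splits {k L : Type*} [Field k] [Field L] [Algebra k L]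
    {u : ℕ → k} {G : k[X]} (hG : G.Separable) (hsplits : (G.map (algebraMap k L)).Splits)
    (hu : recurrenceIdeal u = Ideal.span {G}) :
    ∃ (s : Finset L) (c : L → L), (∀ y ∈ s, ∀ h ∈ recurrenceIdeal u, aeval y h = 0) ∧
      ∀ n, algebraMap k L (u n) = ∑ y ∈ s, c y * y ^ n := by
  classical
  have hGu : G ∈ recurrenceIdeal u := hu.symm ▸ Ideal.mem_span_singleton_self G
  obtain ⟨c, hc⟩ := exists_eq_sum_roots_mul_pow hG.map hsplits (map_mem_recurrenceIdeal hGu)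
  refine ⟨_, c, fun y hy h hh => ?_, hc⟩
  rw [hu, Ideal.mem_span_singleton] at hh
  have hGy := isRoot_of_mem_roots (Multiset.mem_toFinset.mp hy)
  rw [IsRoot.def, eval_map_algebraMap] at hGy
  exact aeval_eq_zero_of_dvd_aeval_eq_zero hh hGy

lemma exists_numberField_splits (G : ℚ[X]) :
    ∃ (L : Type) (_ : Field L) (_ : NumberField L), (G.map (algebraMap ℚ L)).Splits := by
  refine ⟨G.SplittingField, inferInstance, .of_module_finite ℚ G.SplittingField, ?_⟩
  have hmap : (DivisionRing.toRatAlgebra : Algebra ℚ G.SplittingField).algebraMap =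
      (SplittingField.instAlgebra_1 G).algebraMap := Subsingleton.elim _ _
  exact hmap ▸ SplittingField.splits G

lemma exists_fin_eq_sum_mul_pow {L : Type*} [Field L] {u : ℕ → L} {s : Finset L} {c : L → L}
    (hne : ∀ y ∈ s, y ≠ 0) (hint : ∀ y ∈ s, IsIntegral ℤ y)
    (hu : ∀ n, u (n + 1) = ∑ y ∈ s, c y * y ^ n) :
    ∃ (r : ℕ) (x : Fin r → 𝓞 L) (c : Fin r → L), Function.Injective x ∧ (∀ i, x i ≠ 0) ∧
      ∀ n : ℕ, 1 ≤ n → u n = ∑ i, c i * (x i : L) ^ n := by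
  let e := s.equivFin.symm
  refine ⟨_, fun i => ⟨e i, hint _ (e i).2⟩, fun i => c (e i) * (e i : L)⁻¹, fun i j hij => ?_,
    fun i hi => hne _ (e i).2 (congrArg (algebraMap (𝓞 L) L) hi), fun n hn => ?_⟩
  · exact e.injective (Subtype.ext (congrArg (algebraMap (𝓞 L) L) hij))
  obtain ⟨m, rfl⟩ := Nat.exists_eq_add_of_le' hn
  rw [hu, ← Finset.sum_coe_sort, ← e.sum_comp]
  refine Finset.sum_congr rfl fun i _ => ?_
  change c (e i) * (e i : L) ^ m = c (e i) * (e i : L)⁻¹ * (e i : L) ^ (m + 1)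
  rw [mul_assoc, pow_succ', inv_mul_cancel_left₀ (hne _ (e i).2)]

/-- The bases of the powers are nonzero because they are roots of the characteristic polynomial of
`E`, and integral by Fatou's lemma. -/
theorem DoldSeq.exists_eq_sum_mul_pow {d : ℕ → ℤ} (hd : DoldSeq d) {E : LinearRecurrence ℚ}
    (hE : E.charPoly.eval 0 ≠ 0) (hdE : E.IsSolution fun n => (d (n + 1) : ℚ)) :
    ∃ (L : Type) (_ : Field L) (_ : NumberField L) (r : ℕ) (x : Fin r → 𝓞 L) (c : Fin r → L),
      Function.Injective x ∧ (∀ i, x i ≠ 0) ∧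
        ∀ n : ℕ, 1 ≤ n → (d n : L) = ∑ i, c i * (x i : L) ^ n := by
  have hF := charPoly_mem_recurrenceIdeal hdE
  have hI : (recurrenceIdeal fun n => (d (n + 1) : ℚ)).IsRadical := by
    simpa only [eq_intCast] using
      isRadical_recurrenceIdeal_algebraMap (K := ℚ) hd.isRadical_recurrenceIdeal
  obtain ⟨G, hG, hIG⟩ := exists_separable_span_eq_of_isRadical hI
    (Submodule.ne_bot_iff _ |>.mpr ⟨_, hF, E.charPoly_monic.ne_zero⟩)
  obtain ⟨L, _, _, hsplits⟩ := exists_numberField_splits G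
  obtain ⟨s, c, hroot, hc⟩ := exists_eq_sum_mul_pow_of_splits hG hsplits hIG
  have hne : ∀ y ∈ s, y ≠ 0 := by
    rintro _ hy rfl
    have h0 := hroot 0 hy _ hF
    rw [← coeff_zero_eq_aeval_zero', map_eq_zero, coeff_zero_eq_eval_zero] at h0
    exact hE h0
  obtain ⟨Q, hQ, hQmonic⟩ := exists_monic_mem_recurrenceIdeal E (u := fun n => d (n + 1)) hdE
  have hint : ∀ y ∈ s, IsIntegral ℤ y := fun y hy => by
    have hQy := hroot y hy _ (map_mem_recurrenceIdeal (φ := algebraMap ℤ ℚ) hQ)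
    rw [aeval_map_algebraMap] at hQy
    exact ⟨Q, hQmonic, hQy⟩
  refine ⟨L, inferInstance, inferInstance, ?_⟩
  refine exists_fin_eq_sum_mul_pow hne hint (c := c) fun n => ?_
  simpa using hc n

end PowerSum

section Coefficients

/-- Raising the sum for `a m` to the `p`-th power and comparing it with the sum for `a (p * m)`
gives `∑ i, (γ i ^ p - γ i) * (x i ^ p) ^ m = 0` for all `m ≥ 1`. -/
theorem pow_eq_self_of_eq_sum_mul_pow {k : Type*} [CommRing k] [IsDomain k] {p : ℕ}
    (hp : p.Prime) [CharP k p] {a : ℕ → ℤ} (ha : ∀ m, 0 < m → (p : ℤ) ∣ a (p * m) - a m) {r : ℕ}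
    {x γ : Fin r → k} (hx : Function.Injective x) (hx0 : ∀ i, x i ≠ 0)
    (hax : ∀ n : ℕ, 1 ≤ n → (a n : k) = ∑ i, γ i * x i ^ n) (i : Fin r) : γ i ^ p = γ i := by
  have := Fact.mk hp
  have hsum (m : ℕ) (hm : 1 ≤ m) : ∑ i, (γ i ^ p - γ i) * (x i ^ p) ^ m = 0 := by
    have hfrob : ∑ i, γ i ^ p * (x i ^ p) ^ m = a m := by
      have ham : (a m : k) ^ p = a m := map_intCast (frobenius k p) (a m)
      rw [← ham, hax m hm, sum_pow_char p]
      simp only [mul_pow, pow_right_comm]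
    have hpm : ∑ i, γ i * (x i ^ p) ^ m = a (p * m) := by
      simp only [hax (p * m) (Nat.mul_pos hp.pos hm), pow_mul]
    have hcongr : (a (p * m) : k) = a m := by
      rw [← sub_eq_zero, ← Int.cast_sub, CharP.intCast_eq_zero_iff k p]
      exact ha m hm
    simp only [sub_mul, Finset.sum_sub_distrib, hfrob, hpm, hcongr, sub_self]
  have hinj : Function.Injective fun i => x i ^ p := (frobenius_inj k p).comp hx
  have hzero := congrFun (Matrix.eq_zero_of_forall_pow_sum_mul_pow_eq_zero
    (v := fun i => (γ i ^ p - γ i) * x i ^ p) hinj fun j => by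
      simpa only [mul_assoc, ← pow_succ'] using hsum (j + 1) j.succ_pos) i
  exact sub_eq_zero.mp ((mul_eq_zero.mp hzero).resolve_right (pow_ne_zero p (hx0 i)))

variable {K : Type*} [Field K] [NumberField K]

lemma notMem_of_absNorm_lt {p : ℕ} (hp : p.Prime) {q : Ideal (𝓞 K)} (hq : q ≠ ⊤)
    (hpq : (p : 𝓞 K) ∈ q) {y : 𝓞 K} (hy : y ≠ 0) (hyp : (Ideal.span {y}).absNorm < p) :
    y ∉ q := fun hyq => by
  have hmem : (((Ideal.span {y}).absNorm : ℤ) : 𝓞 K) ∈ q := by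
    rw [Int.cast_natCast]
    exact (Ideal.span_singleton_le_iff_mem q).mpr hyq (Ideal.absNorm_mem _)
  rw [intCast_mem_iff_dvd hp hpq hq, Int.natCast_dvd_natCast] at hmem
  have hpos : 0 < (Ideal.span {y}).absNorm := by
    rwa [Nat.pos_iff_ne_zero, Ne, Ideal.absNorm_eq_zero_iff, Ideal.span_singleton_eq_bot]
  exact Nat.not_dvd_of_pos_of_lt hpos hyp hmem

/-- The excluded primes divide the norm of `(∏ i, x i) * ∏ i ≠ j, (x i - x j)`. -/
theorem exists_forall_prime_pow_sub_mem {a : ℕ → ℤ}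
    (ha : ∀ p : ℕ, p.Prime → ∀ m, 0 < m → (p : ℤ) ∣ a (p * m) - a m) {r : ℕ}
    {x γ : Fin r → 𝓞 K} (hx : Function.Injective x) (hx0 : ∀ i, x i ≠ 0)
    (hax : ∀ n : ℕ, 1 ≤ n → (a n : 𝓞 K) = ∑ i, γ i * x i ^ n) :
    ∃ N : ℕ, ∀ p : ℕ, p.Prime → N < p → ∀ q : Ideal (𝓞 K), q.IsPrime → (p : 𝓞 K) ∈ q →
      ∀ i, γ i ^ p - γ i ∈ q := by
  set y : 𝓞 K := (∏ i, x i) * ∏ z ∈ Finset.univ.offDiag, (x z.1 - x z.2)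
  have hy : y ≠ 0 := mul_ne_zero (Finset.prod_ne_zero_iff.mpr fun i _ => hx0 i)
    (Finset.prod_ne_zero_iff.mpr fun z hz =>
      sub_ne_zero.mpr (hx.ne (Finset.mem_offDiag.mp hz).2.2))
  refine ⟨(Ideal.span {y}).absNorm, fun p hp hNp q hq hpq i => ?_⟩
  have hyq : y ∉ q := notMem_of_absNorm_lt hp hq.ne_top hpq hy hNp
  have hxq (i : Fin r) : x i ∉ q := fun hi =>
    hyq (q.mul_mem_right _ (q.prod_mem (Finset.mem_univ i) hi))
  have hxinj : Function.Injective fun i => Ideal.Quotient.mk q (x i) := by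
    intro i j hij
    by_contra hne
    exact hyq (q.mul_mem_left _ (q.prod_mem (i := (i, j)) (by simpa using hne)
      (Ideal.Quotient.eq.mp hij)))
  have := charP_quotient_of_prime_mem hp hpq hq.ne_top
  have hfix := pow_eq_self_of_eq_sum_mul_pow hp (ha p hp) (γ := fun i => Ideal.Quotient.mk q (γ i))
    hxinj (fun i => Ideal.Quotient.eq_zero_iff_mem.not.mpr (hxq i))
    (fun n hn => by simpa using congrArg (Ideal.Quotient.mk q) (hax n hn)) i
  rwa [← map_pow, Ideal.Quotient.eq] at hfix

lemma exists_intCast_mul_eq_coe {ι : Type*} [Finite ι] (c : ι → K) :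
    ∃ D : ℤ, D ≠ 0 ∧ ∃ γ : ι → 𝓞 K, ∀ i, (γ i : K) = D * c i := by
  obtain ⟨⟨_, D, hD, rfl⟩, hc⟩ := IsLocalization.exist_integer_multiples_of_finite
    (Algebra.algebraMapSubmonoid (𝓞 K) (nonZeroDivisors ℤ)) c
  choose γ hγ using hc
  exact ⟨D, nonZeroDivisors.ne_zero hD, γ, fun i => by simpa [Algebra.smul_def] using hγ i⟩

theorem DoldSeq.exists_rat_eq_coeff {d : ℕ → ℤ} (hd : DoldSeq d) {r : ℕ} {x : Fin r → 𝓞 K}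
    {c : Fin r → K} (hx : Function.Injective x) (hx0 : ∀ i, x i ≠ 0)
    (hdx : ∀ n : ℕ, 1 ≤ n → (d n : K) = ∑ i, c i * (x i : K) ^ n) (i : Fin r) :
    ∃ b : ℚ, (b : K) = c i := by
  obtain ⟨D, hD, γ, hγ⟩ := exists_intCast_mul_eq_coe c
  have hDd (n : ℕ) (hn : 1 ≤ n) : ((D * d n : ℤ) : 𝓞 K) = ∑ i, γ i * x i ^ n :=
    RingOfIntegers.ext (by simp [hdx n hn, hγ, Finset.mul_sum, mul_assoc])
  obtain ⟨N, hN⟩ := exists_forall_prime_pow_sub_mem (a := fun n => D * d n)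
    (fun p hp m hm => by simpa only [mul_sub] using (hd.dvd_sub hp hm).mul_left D) hx hx0 hDd
  obtain ⟨b, hb⟩ := exists_rat_eq_of_pow_sub_mem fun p hp hNp q hq hpq => hN p hp hNp q hq hpq i
  refine ⟨b / D, ?_⟩
  rw [Rat.cast_div, hb, hγ, Rat.cast_intCast, mul_div_cancel_left₀ _ (Int.cast_ne_zero.mpr hD)]

lemma eq_sum_trace_of_eq_sum {ι : Type*} [Fintype ι] {y : ℚ} {b : ι → ℚ} {z : ι → K}
    (h : (y : K) = ∑ i, b i * z i) :
    y = ∑ i, b i / Module.finrank ℚ K * Algebra.trace ℚ K (z i) := by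
  have hfinrank : (Module.finrank ℚ K : ℚ) ≠ 0 := Nat.cast_ne_zero.mpr Module.finrank_pos.ne'
  have htrace := congrArg (Algebra.trace ℚ K) h
  simp only [← eq_ratCast (algebraMap ℚ K), Algebra.trace_algebraMap, map_sum, nsmul_eq_mul,
    ← Algebra.smul_def, map_smul, smul_eq_mul] at htrace
  rw [← mul_right_inj' hfinrank, htrace, Finset.mul_sum]
  exact Finset.sum_congr rfl fun i _ => by field_simp

end Coefficients

lemma IsLinearRecurrenceSeq.exists_isSolution {a : ℕ → ℤ} (ha : IsLinearRecurrenceSeq a) :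
    ∃ E : LinearRecurrence ℚ, E.charPoly.eval 0 ≠ 0 ∧ E.IsSolution fun n => (a (n + 1) : ℚ) := by
  obtain ⟨p, α, hp, hα, ha⟩ := ha
  refine ⟨⟨p, fun i => α i⟩, ?_, fun n => ?_⟩
  · have := NeZero.of_pos (Nat.zero_lt_of_lt hp)
    rw [← coeff_zero_eq_eval_zero, LinearRecurrence.charPoly, coeff_sub, finsetSum_coeff,
      Finset.sum_eq_single_of_mem 0 (Finset.mem_univ _)]
    · simpa [coeff_monomial, (NeZero.ne p)] using hα
    · intro i _ hi
      simpa [coeff_monomial] using fun h => absurd h hi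
  · simpa only [Finset.sum_range, Nat.add_right_comm] using ha (n + 1) n.succ_pos

/-- (Minton) An integer linear recurrence sequence is a rational multiple of a Dold
sequence if and only if it is a trace sequence. -/
theorem linearRecurrence_rat_multiple_dold_iff_trace (a : ℕ → ℤ)
    (hlin : IsLinearRecurrenceSeq a) :
    (∃ (q : ℚ) (d : ℕ → ℤ), q ≠ 0 ∧ DoldSeq d ∧ ∀ n : ℕ, 1 ≤ n → (a n : ℚ) = q * (d n : ℚ)) ↔
      Nonempty (TraceSequenceWitness a) := by
  constructor
  · rintro ⟨q, d, hq, hd, had⟩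
    obtain ⟨E, hE, haE⟩ := hlin.exists_isSolution
    have hdE : E.IsSolution fun n => (d (n + 1) : ℚ) := by
      rw [E.is_sol_iff_mem_solSpace] at haE ⊢
      convert E.solSpace.smul_mem q⁻¹ haE using 2 with n
      rw [Pi.smul_apply, had _ n.succ_pos, smul_eq_mul, inv_mul_cancel_left₀ hq]
    obtain ⟨L, _, _, r, x, c, hx, hx0, hdx⟩ := hd.exists_eq_sum_mul_pow hE hdE
    choose b hb using hd.exists_rat_eq_coeff hx hx0 hdx
    refine ⟨⟨L, r, fun i => q * (b i / Module.finrank ℚ L), x, fun n hn => ?_⟩⟩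
    have hdn : ((d n : ℚ) : L) = ∑ i, (b i : L) * (x i : L) ^ n := by
      simpa only [hb, Rat.cast_intCast] using hdx n hn
    rw [had n hn, eq_sum_trace_of_eq_sum hdn, Finset.mul_sum]
    simp only [mul_assoc]
  · rintro ⟨⟨K, r, b, θ, htrace⟩⟩
    obtain ⟨q, d, hq, hd, hqd⟩ := exists_rat_mul_dold_eq_sum_trace b θ
    exact ⟨q, d, hq, hd, fun n hn => (htrace n hn).trans (hqd n)⟩
end

section
/- Let a be a non-negative integer and let (u_n)_{n≥1} be the sequence defined by u_1 = 1, u_2 = a, and u_{n+2} = u_{n+1} + u_n for all n ≥ 1 (so (u_n) = (1, a, 1+a, 1+2a, 2+3a, 3+5a, …)). Then (u_n) is realizable if and only if a = 3. -/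
/-- A sequence of non-negative integers is realizable if for every `n ≥ 1` the Möbius
sum `∑_{d ∣ n} μ(n/d)·a d` is non-negative and divisible by `n`. -/
def Realizable (x : ℕ → ℕ) : Prop :=
  ∀ n : ℕ, 1 ≤ n →
    0 ≤ (∑ d ∈ n.divisors, ArithmeticFunction.moebius (n / d) * (x d : ℤ)) ∧
    (n : ℤ) ∣ ∑ d ∈ n.divisors, ArithmeticFunction.moebius (n / d) * (x d : ℤ)

/-!
The Lucas numbers count the periodic points of the golden mean shift (binary sequences without two
consecutive ones), because they are the traces of the powers of its transition matrix; hence they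
are realizable.

Conversely, a realizable sequence satisfies `x (2 ^ k) ≡ x (2 ^ (k + 1))` modulo `2 ^ (k + 1)`. Two
sequences with the Fibonacci recurrence and the same first term differ by `δ * fib (n - 1)`, where
`δ` is the difference of their second terms. If both are realizable, then `2 ^ (k + 1)` divides
`δ * (fib (2 ^ (k + 1) - 1) - fib (2 ^ k - 1))`, whose second factor is odd, so `δ` is divisible by
every power of two and vanishes.
-/

open Function Finset

section Realizable

variable {x y : ℕ → ℕ}

theorem sum_divisors_eq_iff_sum_moebius_div_mul_eq {R : Type*} [NonAssocRing R] {f g : ℕ → R} :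
    (∀ n > 0, ∑ d ∈ n.divisors, f d = g n) ↔
      ∀ n > 0, ∑ d ∈ n.divisors, (ArithmeticFunction.moebius (n / d) : R) * g d = f n := by
  simp only [ArithmeticFunction.sum_eq_iff_sum_mul_moebius_eq,
    Nat.sum_divisorsAntidiagonal' fun a b ↦ (ArithmeticFunction.moebius a : R) * g b]

/-- In a realization by a map, `c d` is the number of orbits of length `d`. -/
theorem realizable_iff_exists_sum_divisors_mul :
    Realizable x ↔ ∃ c : ℕ → ℕ, ∀ n > 0, ∑ d ∈ n.divisors, d * c d = x n := by
  have inversion (c : ℕ → ℕ) : (∀ n > 0, ∑ d ∈ n.divisors, d * c d = x n) ↔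
      ∀ n > 0, ∑ d ∈ n.divisors, ArithmeticFunction.moebius (n / d) * (x d : ℤ) = n * c n := by
    exact_mod_cast sum_divisors_eq_iff_sum_moebius_div_mul_eq (R := ℤ) (f := fun d ↦ d * c d)
      (g := fun n ↦ x n)
  simp only [inversion]
  constructor
  · intro hx
    have exists_quotient (n : ℕ) : ∃ m : ℕ, n > 0 →
        ∑ d ∈ n.divisors, ArithmeticFunction.moebius (n / d) * (x d : ℤ) = n * m := by
      rcases n.eq_zero_or_pos with rfl | hn
      · exact ⟨0, fun h ↦ absurd h (lt_irrefl 0)⟩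
      · obtain ⟨hnonneg, m, hm⟩ := hx n hn
        lift m to ℕ using nonneg_of_mul_nonneg_right (hm ▸ hnonneg) (by exact_mod_cast hn)
        exact ⟨m, fun _ ↦ hm⟩
    exact Classical.skolem.1 exists_quotient
  · rintro ⟨c, hc⟩ n hn
    rw [hc n hn]
    exact ⟨by positivity, dvd_mul_right _ _⟩

theorem realizable_congr (h : ∀ n > 0, x n = y n) : Realizable x ↔ Realizable y := by
  simp only [realizable_iff_exists_sum_divisors_mul]
  exact exists_congr fun c ↦ forall₂_congr fun n hn ↦ by rw [h n hn]

theorem Realizable.modEq_prime_pow_succ (hx : Realizable x) {p : ℕ} (hp : p.Prime) (k : ℕ) :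
    x (p ^ k) ≡ x (p ^ (k + 1)) [MOD p ^ (k + 1)] := by
  obtain ⟨c, hc⟩ := realizable_iff_exists_sum_divisors_mul.1 hx
  have hsucc : x (p ^ (k + 1)) = x (p ^ k) + p ^ (k + 1) * c (p ^ (k + 1)) := by
    rw [← hc _ (pow_pos hp.pos k), ← hc _ (pow_pos hp.pos (k + 1)), Nat.sum_divisors_prime_pow hp,
      Nat.sum_divisors_prime_pow hp, sum_range_succ _ (k + 1)]
  exact (Nat.modEq_iff_dvd' (hsucc ▸ Nat.le_add_right _ _)).2 (by simp [hsucc])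

end Realizable

section PeriodicPoints

variable {α : Type*} {T : α → α} {x y : α} {n : ℕ}

theorem periodicOrbit_eq_iff_exists_iterate_eq (hx : x ∈ periodicPts T) :
    periodicOrbit T y = periodicOrbit T x ↔ ∃ k < minimalPeriod T x, T^[k] x = y := by
  constructor
  · intro h
    have hy : y ∈ periodicPts T := by
      rwa [← minimalPeriod_pos_iff_mem_periodicPts, ← periodicOrbit_length, h,
        periodicOrbit_length, minimalPeriod_pos_iff_mem_periodicPts]
    obtain ⟨k, hk⟩ := (mem_periodicOrbit_iff hx).1 (h ▸ self_mem_periodicOrbit hy)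
    exact ⟨k % minimalPeriod T x, Nat.mod_lt _ (minimalPeriod_pos_of_mem_periodicPts hx),
      iterate_mod_minimalPeriod_eq.trans hk⟩
  · rintro ⟨k, -, rfl⟩
    exact periodicOrbit_apply_iterate_eq hx k

theorem dvd_ncard_minimalPeriod_eq (T : α → α) (hn : 0 < n) :
    n ∣ {x | minimalPeriod T x = n}.ncard := by
  classical
  obtain hinf | hfin := {x | minimalPeriod T x = n}.infinite_or_finite
  · simp [hinf.ncard]
  rw [Set.ncard_eq_toFinset_card _ hfin, card_eq_sum_card_image (periodicOrbit T)]
  refine dvd_sum fun o ho ↦ ?_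
  obtain ⟨x, hx, rfl⟩ := mem_image.1 ho
  obtain rfl : minimalPeriod T x = n := by simpa using hx
  have hxT : x ∈ periodicPts T := minimalPeriod_pos_iff_mem_periodicPts.1 hn
  have fiber_eq : {y ∈ hfin.toFinset | periodicOrbit T y = periodicOrbit T x} =
      (range (minimalPeriod T x)).image (T^[·] x) := by
    ext y
    simp only [mem_filter, Set.Finite.mem_toFinset, Set.mem_ofPred_eq, mem_image, mem_range,
      ← periodicOrbit_eq_iff_exists_iterate_eq hxT, and_iff_right_iff_imp]
    intro h
    rw [← periodicOrbit_length, h, periodicOrbit_length]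
  rw [fiber_eq, card_image_of_injOn (by simpa using iterate_injOn_Iio_minimalPeriod), card_range]

theorem sum_divisors_ncard_minimalPeriod_eq (hn : 0 < n) (hfin : (ptsOfPeriod T n).Finite) :
    ∑ d ∈ n.divisors, {x | minimalPeriod T x = d}.ncard = (ptsOfPeriod T n).ncard := by
  have hmaps : ∀ x ∈ hfin.toFinset, minimalPeriod T x ∈ n.divisors := fun x hx ↦
    Nat.mem_divisors.2 ⟨IsPeriodicPt.minimalPeriod_dvd (by simpa using hx), hn.ne'⟩
  rw [Set.ncard_eq_toFinset_card _ hfin, card_eq_sum_card_fiberwise hmaps]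
  refine sum_congr rfl fun d hd ↦ ?_
  rw [← Set.ncard_coe_finset]
  congr 1
  ext x
  simp only [Set.mem_ofPred_eq, coe_filter, Set.Finite.mem_toFinset, mem_ptsOfPeriod,
    isPeriodicPt_iff_minimalPeriod_dvd, iff_and_self]
  rintro rfl
  exact Nat.dvd_of_mem_divisors hd

theorem realizable_ncard_ptsOfPeriod (hfin : ∀ n > 0, (ptsOfPeriod T n).Finite) :
    Realizable fun n ↦ (ptsOfPeriod T n).ncard := by
  refine realizable_iff_exists_sum_divisors_mul.2
    ⟨fun d ↦ {x | minimalPeriod T x = d}.ncard / d, fun n hn ↦ ?_⟩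
  rw [← sum_divisors_ncard_minimalPeriod_eq hn (hfin n hn)]
  exact sum_congr rfl fun d hd ↦
    Nat.mul_div_cancel' (dvd_ncard_minimalPeriod_eq T (Nat.pos_of_mem_divisors hd))

end PeriodicPoints

section TracePow

variable {V R : Type*} [Fintype V] [DecidableEq V] [CommSemiring R]

/-- Here `w` lists the interior vertices of a walk of length `n + 1` from `s` to `t`. -/
theorem matrix_pow_succ_apply_eq_sum_prod (A : Matrix V V R) (n : ℕ) (s t : V) :
    (A ^ (n + 1)) s t = ∑ w : Fin n → V, ∏ i : Fin (n + 1),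
      A ((Fin.cons s w : Fin (n + 1) → V) i) ((Fin.snoc w t : Fin (n + 1) → V) i) := by
  induction n generalizing s with
  | zero => simp [Fin.snoc]
  | succ n ih =>
    simp_rw [pow_succ' A (n + 1), Matrix.mul_apply, ih, mul_sum]
    rw [← (Fin.consEquiv fun _ ↦ V).sum_comp, Fintype.sum_prod_type]
    refine sum_congr rfl fun v _ ↦ sum_congr rfl fun w _ ↦ ?_
    change _ = ∏ i : Fin (n + 2), A ((Fin.cons s (Fin.cons v w : Fin (n + 1) → V) : _ → V) i)
      ((Fin.snoc (Fin.cons v w : Fin (n + 1) → V) t : _ → V) i)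
    rw [← Fin.cons_snoc_eq_snoc_cons, Fin.prod_univ_succ (n := n + 1)]
    rfl

theorem trace_matrix_pow_eq_sum_prod (A : Matrix V V R) (n : ℕ) [NeZero n] :
    (A ^ n).trace = ∑ w : ZMod n → V, ∏ i, A (w i) (w (i + 1)) := by
  obtain ⟨n, rfl⟩ := Nat.exists_eq_succ_of_ne_zero (NeZero.ne n)
  simp_rw [Matrix.trace, Matrix.diag_apply, matrix_pow_succ_apply_eq_sum_prod,
    Fin.snoc_eq_cons_rotate, finRotate_apply]
  rw [← Fintype.sum_prod_type']
  exact Fintype.sum_equiv (Fin.consEquiv fun _ ↦ V) _ _ fun _ ↦ rfl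

end TracePow

section PathShift

variable {V : Type*} {r : V → V → Prop} {n : ℕ}

/-- The one-sided infinite paths in the directed graph with edge relation `r`, that is, the
one-sided topological Markov chain with transitions `r`. -/
abbrev PathSpace (r : V → V → Prop) : Type _ := {x : ℕ → V // ∀ k, r (x k) (x (k + 1))}

/-- The left shift on the infinite paths of `r`, which drops the first vertex. -/
def pathShift (r : V → V → Prop) (x : PathSpace r) : PathSpace r :=
  ⟨fun k ↦ x.1 (k + 1), fun k ↦ x.2 (k + 1)⟩

theorem pathShift_iterate_apply (n : ℕ) (x : PathSpace r) (k : ℕ) :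
    ((pathShift r)^[n] x).1 k = x.1 (k + n) := by
  induction n generalizing x with
  | zero => rfl
  | succ n ih => rw [iterate_succ_apply, ih]; rfl

theorem isPeriodicPt_pathShift_iff {x : PathSpace r} :
    IsPeriodicPt (pathShift r) n x ↔ Periodic x.1 n := by
  simp only [IsPeriodicPt, IsFixedPt, Periodic, Subtype.ext_iff, funext_iff,
    pathShift_iterate_apply]

/-- The paths of period `n` correspond to the closed walks of length `n`, encoded as maps on the
cyclic index set `ZMod n`. -/
def ptsOfPeriodPathShiftEquiv (r : V → V → Prop) (n : ℕ) [NeZero n] :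
    ptsOfPeriod (pathShift r) n ≃ {w : ZMod n → V // ∀ i, r (w i) (w (i + 1))} where
  toFun x := ⟨fun i ↦ x.1.1 i.val, fun i ↦ by
    have hx : Periodic x.1.1 n := isPeriodicPt_pathShift_iff.1 x.2
    have val_succ : (i + 1).val = (i.val + 1) % n := by
      rw [← ZMod.val_natCast, Nat.cast_succ, ZMod.natCast_zmod_val]
    simp only [val_succ, hx.map_mod_nat]
    exact x.1.2 i.val⟩
  invFun w := ⟨⟨fun k ↦ w.1 k, fun k ↦ by simpa using w.2 k⟩,
    isPeriodicPt_pathShift_iff.2 fun k ↦ by simp⟩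
  left_inv x := by
    have hx : Periodic x.1.1 n := isPeriodicPt_pathShift_iff.1 x.2
    refine Subtype.ext (Subtype.ext (funext fun k ↦ ?_))
    simp only [ZMod.val_natCast, hx.map_mod_nat]
  right_inv w := by simp

theorem finite_ptsOfPeriod_pathShift [Finite V] (r : V → V → Prop) (hn : 0 < n) :
    (ptsOfPeriod (pathShift r) n).Finite :=
  have : NeZero n := ⟨hn.ne'⟩
  Finite.of_equiv _ (ptsOfPeriodPathShiftEquiv r n).symm

/-- The adjacency matrix of the directed graph with edge relation `r`, with natural number entries
so that the traces of its powers count closed walks. -/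
def relMatrix (r : V → V → Prop) [DecidableRel r] : Matrix V V ℕ :=
  Matrix.of fun i j ↦ if r i j then 1 else 0

variable [Fintype V] [DecidableEq V] (r) [DecidableRel r]

theorem ncard_ptsOfPeriod_pathShift (hn : 0 < n) :
    (ptsOfPeriod (pathShift r) n).ncard = (relMatrix r ^ n).trace := by
  have : NeZero n := ⟨hn.ne'⟩
  calc (ptsOfPeriod (pathShift r) n).ncard
    _ = Fintype.card {w : ZMod n → V // ∀ i, r (w i) (w (i + 1))} := by
      rw [← Nat.card_coe_set_eq, Nat.card_congr (ptsOfPeriodPathShiftEquiv r n),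
        Nat.card_eq_fintype_card]
    _ = ∑ w : ZMod n → V, ∏ i, relMatrix r (w i) (w (i + 1)) := by
      simp [relMatrix, Fintype.card_subtype, Fintype.prod_ite_zero]
    _ = (relMatrix r ^ n).trace := (trace_matrix_pow_eq_sum_prod _ n).symm

theorem realizable_trace_relMatrix_pow : Realizable fun n ↦ (relMatrix r ^ n).trace :=
  (realizable_congr fun _ hn ↦ ncard_ptsOfPeriod_pathShift r hn).1
    (realizable_ncard_ptsOfPeriod fun _ hn ↦ finite_ptsOfPeriod_pathShift r hn)

end PathShift

section Lucas

/-- The Lucas numbers `2, 1, 3, 4, 7, …`. -/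
def lucas : ℕ → ℕ
  | 0 => 2
  | 1 => 1
  | n + 2 => lucas (n + 1) + lucas n

/-- The transition relation of the golden mean shift, which forbids two consecutive ones; the
symbols `0` and `1` are encoded as `false` and `true`. -/
abbrev goldenMean (s t : Bool) : Prop := ¬(s = true ∧ t = true)

theorem relMatrix_goldenMean_sq :
    relMatrix goldenMean ^ 2 = relMatrix goldenMean + 1 := by
  decide

theorem trace_relMatrix_goldenMean_pow (n : ℕ) : (relMatrix goldenMean ^ n).trace = lucas n := by
  induction n using Nat.twoStepInduction with
  | zero => decide
  | one => decide
  | more n ih ih_succ =>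
    rw [pow_add, relMatrix_goldenMean_sq, mul_add_one, ← pow_succ, Matrix.trace_add, ih, ih_succ,
      lucas]

theorem realizable_lucas : Realizable lucas :=
  (realizable_congr fun n _ ↦ trace_relMatrix_goldenMean_pow n).1
    (realizable_trace_relMatrix_pow goldenMean)

end Lucas

section FibonacciRecurrence

theorem fib_dvd_fib_iff {m n : ℕ} (hm : 2 < m) : Nat.fib m ∣ Nat.fib n ↔ m ∣ n := by
  refine ⟨fun h ↦ ?_, Nat.fib_dvd m n⟩
  have fib_gcd_eq : Nat.fib (m.gcd n) = Nat.fib m := by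
    rw [Nat.fib_gcd, Nat.gcd_eq_left h]
  have hge : m ≤ m.gcd n := by
    by_contra! hlt
    refine fib_gcd_eq.not_lt ?_
    calc Nat.fib (m.gcd n)
      _ ≤ Nat.fib (m - 1) := Nat.fib_mono (Nat.le_sub_one_of_lt hlt)
      _ < Nat.fib m := (Nat.fib_lt_fib (by omega)).2 (by omega)
  exact Nat.gcd_eq_left_iff_dvd.1 ((Nat.gcd_le_left n (by omega)).antisymm hge)

theorem odd_fib_two_pow_succ_sub_one_sub_fib (k : ℕ) :
    Odd ((Nat.fib (2 ^ (k + 1) - 1) : ℤ) - Nat.fib (2 ^ k - 1)) := by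
  have even_fib_iff (n : ℕ) : Even (Nat.fib n) ↔ 3 ∣ n :=
    even_iff_two_dvd.trans (fib_dvd_fib_iff (m := 3) (by decide))
  have three_not_dvd : ¬ 3 ∣ 2 ^ k := fun h ↦
    absurd (Nat.prime_three.dvd_of_dvd_pow h) (by decide)
  have three_dvd_iff : ¬ 3 ∣ 2 ^ (k + 1) - 1 ↔ 3 ∣ 2 ^ k - 1 := by
    have : 2 ^ k % 3 = 1 ∨ 2 ^ k % 3 = 2 := by omega
    rw [pow_succ]
    omega
  rwa [Int.odd_sub, ← Int.not_even_iff_odd, Int.even_coe_nat, Int.even_coe_nat, even_fib_iff,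
    even_fib_iff]

theorem eq_add_sub_mul_fib_of_recurrence {R : Type*} [CommRing R] {u v : ℕ → R}
    (hu : ∀ n ≥ 1, u (n + 2) = u (n + 1) + u n) (hv : ∀ n ≥ 1, v (n + 2) = v (n + 1) + v n)
    (h1 : u 1 = v 1) {n : ℕ} (hn : 1 ≤ n) :
    u n = v n + (u 2 - v 2) * Nat.fib (n - 1) := by
  obtain ⟨n, rfl⟩ := Nat.exists_eq_add_of_le' hn
  rw [Nat.add_sub_cancel]
  induction n using Nat.twoStepInduction with
  | zero => simp [h1]
  | one => simp
  | more n ih ih_succ =>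
    rw [hu (n + 1) (by omega), hv (n + 1) (by omega), ih (by omega), ih_succ (by omega),
      Nat.fib_add_two]
    push_cast
    ring

theorem Realizable.eq_of_fibonacci_recurrence {u v : ℕ → ℕ} (hu : Realizable u)
    (hv : Realizable v) (hu_rec : ∀ n ≥ 1, u (n + 2) = u (n + 1) + u n)
    (hv_rec : ∀ n ≥ 1, v (n + 2) = v (n + 1) + v n) (h1 : u 1 = v 1) : u 2 = v 2 := by
  by_contra hne
  set δ : ℤ := u 2 - v 2
  obtain ⟨k, hk⟩ : FiniteMultiplicity 2 δ :=
    Int.finiteMultiplicity_iff.2 ⟨by decide, sub_ne_zero.2 (mod_cast hne)⟩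
  refine hk ?_
  have sub_eq (m : ℕ) : (u (2 ^ m) : ℤ) - v (2 ^ m) = δ * Nat.fib (2 ^ m - 1) :=
    sub_eq_iff_eq_add'.2 <| eq_add_sub_mul_fib_of_recurrence (u := fun n ↦ (u n : ℤ))
      (v := fun n ↦ (v n : ℤ)) (mod_cast hu_rec) (mod_cast hv_rec) (mod_cast h1)
      Nat.one_le_two_pow
  have dvd_mul_sub : (2 : ℤ) ^ (k + 1) ∣
      δ * (Nat.fib (2 ^ (k + 1) - 1) - Nat.fib (2 ^ k - 1)) := by
    have hdvd := dvd_sub (hu.modEq_prime_pow_succ Nat.prime_two k).dvd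
      (hv.modEq_prime_pow_succ Nat.prime_two k).dvd
    rw [sub_sub_sub_comm, sub_eq, sub_eq, ← mul_sub] at hdvd
    exact_mod_cast hdvd
  have hcoprime := Int.isCoprime_two_left.2 (odd_fib_two_pow_succ_sub_one_sub_fib k)
  exact hcoprime.pow_left.dvd_of_dvd_mul_right dvd_mul_sub

end FibonacciRecurrence

/-- (Puri–Ward) The Fibonacci-type sequence `(1, a, 1+a, 1+2a, 2+3a, 3+5a, …)` given by
`u 1 = 1`, `u 2 = a` and `u (n+2) = u (n+1) + u n` is realizable if and only if `a = 3`
(in which case it is the Lucas sequence). -/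
theorem fibonacci_type_realizable_iff_lucas (a : ℕ) (u : ℕ → ℕ)
    (h1 : u 1 = 1) (h2 : u 2 = a)
    (hrec : ∀ n : ℕ, 1 ≤ n → u (n + 2) = u (n + 1) + u n) :
    Realizable u ↔ a = 3 := by
  have lucas_rec : ∀ n ≥ 1, lucas (n + 2) = lucas (n + 1) + lucas n := fun _ _ ↦ rfl
  constructor
  · intro hu
    exact h2.symm.trans (hu.eq_of_fibonacci_recurrence realizable_lucas hrec lucas_rec h1)
  · rintro rfl
    refine (realizable_congr fun n hn ↦ ?_).2 realizable_lucas
    have hn_eq := eq_add_sub_mul_fib_of_recurrence (u := fun n ↦ (u n : ℤ))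
      (v := fun n ↦ (lucas n : ℤ)) (mod_cast hrec) (mod_cast lucas_rec) (mod_cast h1) hn
    simpa [h2, lucas] using hn_eq
end
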